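/- For every nonnegative integer n, the operator T_2 = Σ_{i=1}^N z_i² ∂_i² + 2a Σ_{i=1}^N (z_i − z_{i+1})^{-1}(z_i² ∂_i − z_{i+1}² ∂_{i+1}) − 2a Σ_{i=1}^N z_i z_{i+1} (z_i − z_{i+1})^{-2}(1 − K_{i,i+1}), acting on Σ-valued polynomials with K_{i,i+1} exchanging the variables z_i and z_{i+1} (and acting trivially on the spin component), leaves invariant the space 𝒯_2^n spanned by all elements of the form f(σ_1,τ_{N−1},τ_N) Λ|s⟩, g(τ_{N−1},τ_N) Λ(z_1|s⟩), and q(σ_1,τ_N) Λ(z_2 z_3⋯z_N |s⟩), where |s⟩ ranges over Σ, f is a polynomial in σ_1, τ_{N−1}, τ_N of degree at most 1 in σ_1 and at most 1 in τ_{N−1} with total z-degree at most n, g is a polynomial in τ_{N−1}, τ_N of degree at most 1 in τ_{N−1} with total z-degree at most n−1, and q is a polynomial in σ_1, τ_N of degree at most 1 in σ_1 with total z-degree at most n−N+1. In particular, for any element Φ of 𝒯_2^n, the a priori rational-function-valued expression T_2 Φ is a Σ-valued polynomial lying in 𝒯_2^n. -/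

import Mathlib

noncomputable section

open MvPolynomial

/-- Polynomials in `N` variables over `ℂ`. -/
abbrev MvP (N : ℕ) : Type := MvPolynomial (Fin N) ℂ

/-- The spin space `Σ`: complex functions on `Fin N → Fin d`. -/
abbrev SpinV (N d : ℕ) : Type := (Fin N → Fin d) → ℂ

/-- `Σ`-valued polynomials. -/
abbrev SpinPoly (N d : ℕ) : Type := (Fin N → Fin d) → MvP N

/-- The canonical embedding of polynomials into the field of rational functions. -/
noncomputable def phi (N : ℕ) : MvP N →+* FractionRing (MvP N) :=
  algebraMap (MvP N) (FractionRing (MvP N))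

/-- The power sum `σ_k = ∑ i, z_i ^ k`. -/
def sig (N k : ℕ) : MvP N := ∑ i : Fin N, X i ^ k

/-- The top elementary symmetric polynomial `τ_N = ∏ i, z_i`. -/
def tauTop (N : ℕ) : MvP N := ∏ i : Fin N, X i

/-- The elementary symmetric polynomial `τ_{N-1} = ∑ i, ∏_{j ≠ i} z_j`. -/
def tauSub (N : ℕ) : MvP N := ∑ i : Fin N, ∏ j ∈ Finset.univ.erase i, X j

/-- The action of a permutation `π ∈ S_N` on the spin space, permuting the `N` spin slots. -/
def spinPerm {N d : ℕ} (π : Equiv.Perm (Fin N)) (v : SpinV N d) : SpinV N d :=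
  fun c => v (c ∘ π)

/-- The spin vector `|s_i⟩ = (1/N!) ∑_{π ∈ S_N, π(1) = i} π |s⟩`. -/
noncomputable def sComp {N d : ℕ} [NeZero N] (s : SpinV N d) (i : Fin N) : SpinV N d :=
  (N.factorial : ℂ)⁻¹ •
    ∑ π ∈ Finset.univ.filter (fun π : Equiv.Perm (Fin N) => π 0 = i), spinPerm π s

/-- The symmetrization `Λ|s⟩ = ∑ i, |s_i⟩`. -/
noncomputable def Lam {N d : ℕ} [NeZero N] (s : SpinV N d) : SpinV N d :=
  ∑ i : Fin N, sComp s i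

/-- The operator
`T_2 = ∑ i z_i² ∂_i² + 2a ∑ i (z_i - z_{i+1})⁻¹ (z_i² ∂_i - z_{i+1}² ∂_{i+1})
  - 2a ∑ i z_i z_{i+1} (z_i - z_{i+1})⁻² (1 - K_{i,i+1})`
(indices cyclic, `K_{i,i+1}` exchanging the variables `z_i` and `z_{i+1}`),
computed in the field of rational functions; it acts componentwise on `Σ`-valued
polynomials (`K_{i,i+1}` acting trivially on the spin component). -/
noncomputable def T2op (N : ℕ) [NeZero N] (a : ℝ) (f : MvP N) : FractionRing (MvP N) :=
  (∑ i : Fin N, phi N (X i ^ 2 * pderiv i (pderiv i f)))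
  + phi N (C ((2 * a : ℝ) : ℂ)) *
      ∑ i : Fin N, (phi N (X i - X (i + 1)))⁻¹ *
        phi N (X i ^ 2 * pderiv i f - X (i + 1) ^ 2 * pderiv (i + 1) f)
  - phi N (C ((2 * a : ℝ) : ℂ)) *
      ∑ i : Fin N, phi N (X i * X (i + 1)) * ((phi N (X i - X (i + 1)))⁻¹) ^ 2 *
        phi N (f - rename (Equiv.swap i (i + 1)) f)

/-- Generators of type `f(σ_1, τ_{N-1}, τ_N) Λ|s⟩`, where `f` has degree at most `1` in `σ_1`
and in `τ_{N-1}`, and total `z`-degree at most `n`. -/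
def T2genF (N d n : ℕ) [NeZero N] : Set (SpinPoly N d) :=
  {Φ | ∃ (s : SpinV N d) (F : MvPolynomial (Fin 3) ℂ),
    F.degreeOf 0 ≤ 1 ∧ F.degreeOf 1 ≤ 1 ∧
    (aeval ![sig N 1, tauSub N, tauTop N] F : MvP N).totalDegree ≤ n ∧
    Φ = fun c => C (Lam s c) * aeval ![sig N 1, tauSub N, tauTop N] F}

/-- Generators of type `g(τ_{N-1}, τ_N) Λ(z_1 |s⟩)`, where `g` has degree at most `1` in
`τ_{N-1}` and total `z`-degree at most `n - 1`. -/
def T2genG (N d n : ℕ) [NeZero N] : Set (SpinPoly N d) :=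
  {Φ | ∃ (s : SpinV N d) (G : MvPolynomial (Fin 2) ℂ),
    G.degreeOf 0 ≤ 1 ∧
    (aeval ![tauSub N, tauTop N] G : MvP N).totalDegree + 1 ≤ n ∧
    Φ = fun c => ∑ i : Fin N, C (sComp s i c) * (X i * aeval ![tauSub N, tauTop N] G)}

/-- Generators of type `q(σ_1, τ_N) Λ(z_2 ⋯ z_N |s⟩)`, where `q` has degree at most `1` in
`σ_1` and total `z`-degree at most `n - N + 1`. -/
def T2genQ (N d n : ℕ) [NeZero N] : Set (SpinPoly N d) :=
  {Φ | ∃ (s : SpinV N d) (Q : MvPolynomial (Fin 2) ℂ),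
    Q.degreeOf 0 ≤ 1 ∧
    (aeval ![sig N 1, tauTop N] Q : MvP N).totalDegree + (N - 1) ≤ n ∧
    Φ = fun c => ∑ i : Fin N,
      C (sComp s i c) * ((∏ j ∈ Finset.univ.erase i, X j) * aeval ![sig N 1, tauTop N] Q)}

/-- The space `𝒯_2^n`. -/
noncomputable def T2space (N d n : ℕ) [NeZero N] : Submodule ℂ (SpinPoly N d) :=
  Submodule.span ℂ (T2genF N d n ∪ T2genG N d n ∪ T2genQ N d n)

/-!
`T_2` satisfies the product rule `T_2(p g) = p T_2 g + g T_2 p + 2 Γ(p, g)` whenever `g` is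
symmetric, where `Γ(p, g) = ∑ i, (z_i ∂_i p) (z_i ∂_i g)`, and every squarefree monomial `z_S` is
an eigenvector: the two-body part of a pair `{i, j}` fixes `z_S` if the pair meets `S` and kills it
otherwise. Hence `1`, `σ_1`, `τ_{N-1}`, `τ_N`, `z_j` and `∏_{i ≠ j} z_i` are eigenvectors with
eigenvalues independent of `j`. The remaining generators are, up to powers of `τ_N`, products of
two of these, and their `Γ` is the product itself up to a multiple of `τ_N`. So `T_2` is
triangular on the monomial generators, with corrections in the span of the powers of `τ_N`.
-/

section PartialDerivatives

variable {σ R : Type*} [CommSemiring R]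

theorem pderiv_prod_X [DecidableEq σ] (i : σ) (S : Finset σ) :
    pderiv i (∏ j ∈ S, X j : MvPolynomial σ R) = if i ∈ S then ∏ j ∈ S.erase i, X j else 0 := by
  have pderiv_eq_zero {T : Finset σ} (hi : i ∉ T) :
      pderiv i (∏ j ∈ T, X j : MvPolynomial σ R) = 0 := by
    refine Finset.prod_induction _ (fun f => pderiv i f = 0) (fun f g hf hg => ?_) pderiv_one
      fun j hj => pderiv_X_of_ne (ne_of_mem_of_not_mem hj hi)
    rw [pderiv_mul, hf, hg, zero_mul, mul_zero, add_zero]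
  split_ifs with hi
  · rw [← Finset.mul_prod_erase S X hi, pderiv_mul, pderiv_X_self,
      pderiv_eq_zero (Finset.notMem_erase i S), one_mul, mul_zero, add_zero]
  · exact pderiv_eq_zero hi

theorem X_mul_pderiv_prod_X [DecidableEq σ] (i : σ) (S : Finset σ) :
    X i * pderiv i (∏ j ∈ S, X j : MvPolynomial σ R) = if i ∈ S then ∏ j ∈ S, X j else 0 := by
  rw [pderiv_prod_X, mul_ite, mul_zero]
  exact if_ctx_congr Iff.rfl (Finset.mul_prod_erase S X) fun _ => rfl

theorem isHomogeneous_prod_X (S : Finset σ) :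
    (∏ i ∈ S, X i : MvPolynomial σ R).IsHomogeneous S.card := by
  simpa using IsHomogeneous.prod S X (fun _ => 1) fun i _ => isHomogeneous_X R i

variable [Fintype σ]

/-- The second-order part `∑ i, z_i² ∂_i²` of `T_2`. -/
def secondOrderPart (f : MvPolynomial σ R) : MvPolynomial σ R :=
  ∑ i, X i ^ 2 * pderiv i (pderiv i f)

/-- The carré du champ `∑ i, (z_i ∂_i p) (z_i ∂_i q)` of `∑ i, z_i² ∂_i²`: half the defect of
this operator from being a derivation. -/
def carreDuChamp (p q : MvPolynomial σ R) : MvPolynomial σ R :=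
  ∑ i, (X i * pderiv i p) * (X i * pderiv i q)

theorem secondOrderPart_mul (p q : MvPolynomial σ R) :
    secondOrderPart (p * q) =
      p * secondOrderPart q + q * secondOrderPart p + 2 * carreDuChamp p q := by
  simp only [secondOrderPart, carreDuChamp, Finset.mul_sum, ← Finset.sum_add_distrib]
  refine Finset.sum_congr rfl fun i _ => ?_
  simp only [pderiv_mul, map_add]
  ring

theorem secondOrderPart_prod_X (S : Finset σ) :
    secondOrderPart (∏ j ∈ S, X j : MvPolynomial σ R) = 0 := by
  classical
  refine Finset.sum_eq_zero fun i _ => ?_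
  rw [pderiv_prod_X, apply_ite (pderiv i), pderiv_prod_X, if_neg (Finset.notMem_erase i S),
    map_zero, ite_self, mul_zero]

theorem carreDuChamp_X_left (j : σ) (q : MvPolynomial σ R) :
    carreDuChamp (X j) q = X j * (X j * pderiv j q) := by
  rw [carreDuChamp, Finset.sum_eq_single j (fun i _ hij => ?_) (by simp), pderiv_X_self, mul_one]
  rw [pderiv_X_of_ne hij.symm, mul_zero, zero_mul]

theorem carreDuChamp_sum_X_right (p : MvPolynomial σ R) :
    carreDuChamp p (∑ i, X i) = ∑ i, X i * pderiv i p * X i := by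
  classical
  simp [carreDuChamp, pderiv_X, Pi.single_apply]

theorem carreDuChamp_prod_X_univ {m : ℕ} {p : MvPolynomial σ R} (hp : p.IsHomogeneous m) :
    carreDuChamp p (∏ i, X i) = (m : MvPolynomial σ R) * (p * ∏ i, X i) := by
  classical
  simp only [carreDuChamp, X_mul_pderiv_prod_X, Finset.mem_univ, if_true, ← Finset.sum_mul]
  rw [hp.sum_X_mul_pderiv, nsmul_eq_mul, mul_assoc]

end PartialDerivatives

section ExchangeOperator

variable {σ R : Type*} [CommRing R] [IsDomain R]

theorem algebraMap_X_sub_X_ne_zero {i j : σ} (hij : i ≠ j) :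
    algebraMap (MvPolynomial σ R) (FractionRing (MvPolynomial σ R)) (X i - X j) ≠ 0 := by
  rw [Ne, IsFractionRing.to_map_eq_zero_iff, sub_eq_zero]
  exact fun h => hij (X_injective h)

variable [DecidableEq σ]

/-- The two-body part of `T_2` for the pair `(i, j)`:
`(z_i - z_j)⁻¹ (z_i² ∂_i - z_j² ∂_j) - z_i z_j (z_i - z_j)⁻² (1 - K_{i,j})`.
The junk value `0⁻¹ = 0` makes it vanish for `i = j`. -/
def pairOp (i j : σ) (f : MvPolynomial σ R) : FractionRing (MvPolynomial σ R) :=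
  (algebraMap (MvPolynomial σ R) _ (X i - X j))⁻¹ *
      algebraMap (MvPolynomial σ R) _ (X i ^ 2 * pderiv i f - X j ^ 2 * pderiv j f) -
    algebraMap (MvPolynomial σ R) _ (X i * X j) *
      ((algebraMap (MvPolynomial σ R) _ (X i - X j))⁻¹) ^ 2 *
      algebraMap (MvPolynomial σ R) _ (f - rename (Equiv.swap i j) f)

theorem pairOp_mul {i j : σ} (p : MvPolynomial σ R) {g : MvPolynomial σ R}
    (hg : rename (Equiv.swap i j) g = g) :
    pairOp i j (p * g) =
      algebraMap (MvPolynomial σ R) _ p * pairOp i j g +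
        algebraMap (MvPolynomial σ R) _ g * pairOp i j p := by
  simp only [pairOp, pderiv_mul, map_mul, map_add, map_sub, map_pow, hg]
  ring

theorem pairOp_one (i j : σ) : pairOp i j (1 : MvPolynomial σ R) = 0 := by
  simp [pairOp]

theorem pairOp_mul_prod_X {i j : σ} {S : Finset σ} (hi : i ∉ S) (hj : j ∉ S)
    (p : MvPolynomial σ R) :
    pairOp i j (p * ∏ k ∈ S, X k) =
      algebraMap (MvPolynomial σ R) _ (∏ k ∈ S, X k) * pairOp i j p := by
  have swap_invariant : rename (Equiv.swap i j) (∏ k ∈ S, X k : MvPolynomial σ R) =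
      ∏ k ∈ S, X k := by
    rw [map_prod]
    refine Finset.prod_congr rfl fun k hk => ?_
    rw [rename_X, Equiv.swap_apply_of_ne_of_ne (ne_of_mem_of_not_mem hk hi)
      (ne_of_mem_of_not_mem hk hj)]
  have pairOp_eq_zero : pairOp i j (∏ k ∈ S, X k : MvPolynomial σ R) = 0 := by
    simp [pairOp, pderiv_prod_X, hi, hj, swap_invariant]
  rw [pairOp_mul p swap_invariant, pairOp_eq_zero, mul_zero, zero_add]

theorem pairOp_X_left {i j : σ} (hij : i ≠ j) :
    pairOp i j (X i : MvPolynomial σ R) = algebraMap (MvPolynomial σ R) _ (X i) := by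
  have h := algebraMap_X_sub_X_ne_zero (R := R) hij
  simp only [pairOp, pderiv_X_self, pderiv_X_of_ne hij, rename_X, Equiv.swap_apply_left,
    mul_one, mul_zero, sub_zero]
  field_simp
  simp only [map_sub, map_mul, map_pow]
  ring

theorem pairOp_X_right {i j : σ} (hij : i ≠ j) :
    pairOp i j (X j : MvPolynomial σ R) = algebraMap (MvPolynomial σ R) _ (X j) := by
  have h := algebraMap_X_sub_X_ne_zero (R := R) hij
  simp only [pairOp, pderiv_X_self, pderiv_X_of_ne hij.symm, rename_X, Equiv.swap_apply_right,
    mul_one, mul_zero, zero_sub]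
  field_simp
  simp only [map_sub, map_mul, map_pow, map_neg]
  ring

theorem pairOp_X_mul_X {i j : σ} (hij : i ≠ j) :
    pairOp i j (X i * X j : MvPolynomial σ R) = algebraMap (MvPolynomial σ R) _ (X i * X j) := by
  have h := algebraMap_X_sub_X_ne_zero (R := R) hij
  simp only [pairOp, pderiv_mul, pderiv_X_self, pderiv_X_of_ne hij, pderiv_X_of_ne hij.symm,
    map_mul (rename (Equiv.swap i j)), rename_X, Equiv.swap_apply_left, Equiv.swap_apply_right]
  field_simp
  simp only [map_sub, map_add, map_mul, map_pow, map_one, map_zero]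
  ring

theorem pairOp_prod_X {i j : σ} (hij : i ≠ j) (S : Finset σ) :
    pairOp i j (∏ k ∈ S, X k : MvPolynomial σ R) =
      if i ∈ S ∨ j ∈ S then algebraMap (MvPolynomial σ R) _ (∏ k ∈ S, X k) else 0 := by
  by_cases hi : i ∈ S <;> by_cases hj : j ∈ S
  · have hjS : j ∈ S.erase i := Finset.mem_erase.mpr ⟨hij.symm, hj⟩
    rw [if_pos (Or.inl hi), ← Finset.mul_prod_erase S X hi,
      ← Finset.mul_prod_erase (S.erase i) X hjS, ← mul_assoc,
      pairOp_mul_prod_X (by simp) (by simp), pairOp_X_mul_X hij, ← map_mul, mul_comm]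
  · rw [if_pos (Or.inl hi), ← Finset.mul_prod_erase S X hi,
      pairOp_mul_prod_X (by simp) (by simp [hj]), pairOp_X_left hij, ← map_mul, mul_comm]
  · rw [if_pos (Or.inr hj), ← Finset.mul_prod_erase S X hj,
      pairOp_mul_prod_X (by simp [hi]) (by simp), pairOp_X_right hij, ← map_mul, mul_comm]
  · rw [if_neg (not_or_intro hi hj), ← one_mul (∏ k ∈ S, X k), pairOp_mul_prod_X hi hj,
      pairOp_one, mul_zero]

end ExchangeOperator

section SymmetricPolynomials

variable {N : ℕ}

theorem sig_one : sig N 1 = ∑ i, X i := by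
  simp only [sig, pow_one]

theorem X_mul_prod_erase (j : Fin N) :
    X j * ∏ i ∈ Finset.univ.erase j, X i = tauTop N :=
  Finset.mul_prod_erase _ _ (Finset.mem_univ j)

theorem X_mul_pderiv_tauSub (i : Fin N) :
    X i * pderiv i (tauSub N) = tauSub N - ∏ j ∈ Finset.univ.erase i, X j := by
  rw [tauSub, map_sum, Finset.mul_sum, ← Finset.sum_erase_eq_sub (Finset.mem_univ i),
    ← Finset.sum_erase (a := i) Finset.univ]
  · refine Finset.sum_congr rfl fun j hj => ?_
    rw [X_mul_pderiv_prod_X, if_pos]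
    exact Finset.mem_erase.mpr ⟨(Finset.ne_of_mem_erase hj).symm, Finset.mem_univ i⟩
  · rw [X_mul_pderiv_prod_X, if_neg (Finset.notMem_erase i _)]

theorem isHomogeneous_sig_one : (sig N 1).IsHomogeneous 1 := by
  rw [sig_one]
  exact IsHomogeneous.sum _ _ _ fun i _ => isHomogeneous_X ℂ i

theorem isHomogeneous_prod_erase_X (j : Fin N) :
    (∏ i ∈ Finset.univ.erase j, X i : MvP N).IsHomogeneous (N - 1) := by
  simpa using isHomogeneous_prod_X (R := ℂ) (Finset.univ.erase j)

theorem isHomogeneous_tauSub : (tauSub N).IsHomogeneous (N - 1) :=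
  IsHomogeneous.sum _ _ _ fun j _ => isHomogeneous_prod_erase_X j

theorem isHomogeneous_tauTop : (tauTop N).IsHomogeneous N := by
  simpa [tauTop] using isHomogeneous_prod_X (R := ℂ) (Finset.univ : Finset (Fin N))

theorem isSymmetric_sig_one : (sig N 1).IsSymmetric :=
  psum_isSymmetric (Fin N) ℂ 1

theorem isSymmetric_tauTop : (tauTop N).IsSymmetric := fun e => by
  simp only [tauTop, map_prod, rename_X]
  exact Equiv.prod_comp e (X : Fin N → MvP N)

theorem isSymmetric_tauSub : (tauSub N).IsSymmetric := fun e => by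
  have rename_prod_erase (j : Fin N) :
      rename e (∏ i ∈ Finset.univ.erase j, X i : MvP N) =
        ∏ i ∈ Finset.univ.erase (e j), X i := by
    simp only [map_prod, rename_X]
    exact Finset.prod_equiv e (by simp) fun _ _ => rfl
  simp only [tauSub, map_sum, rename_prod_erase]
  exact Equiv.sum_comp e fun j => (∏ i ∈ Finset.univ.erase j, X i : MvP N)

theorem carreDuChamp_tauTop {m : ℕ} {p : MvP N} (hp : p.IsHomogeneous m) :
    carreDuChamp p (tauTop N) = C (m : ℂ) * (p * tauTop N) := by
  rw [tauTop, carreDuChamp_prod_X_univ hp, map_natCast]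

theorem carreDuChamp_tauSub_sig :
    carreDuChamp (tauSub N) (sig N 1) = tauSub N * sig N 1 - C (N : ℂ) * tauTop N := by
  simp only [sig_one, carreDuChamp_sum_X_right, X_mul_pderiv_tauSub, sub_mul,
    Finset.sum_sub_distrib, mul_comm (∏ j ∈ _, X j) (X _), X_mul_prod_erase]
  simp [Finset.mul_sum]

theorem carreDuChamp_X_tauSub (j : Fin N) :
    carreDuChamp (X j) (tauSub N) = X j * tauSub N - tauTop N := by
  rw [carreDuChamp_X_left, X_mul_pderiv_tauSub, mul_sub, X_mul_prod_erase]

theorem carreDuChamp_prod_erase_sig (j : Fin N) :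
    carreDuChamp (∏ i ∈ Finset.univ.erase j, X i) (sig N 1) =
      (∏ i ∈ Finset.univ.erase j, X i) * sig N 1 - tauTop N := by
  simp only [sig_one, carreDuChamp_sum_X_right, X_mul_pderiv_prod_X, ite_mul, zero_mul,
    Finset.sum_ite_mem, Finset.univ_inter]
  rw [← Finset.mul_sum, Finset.sum_erase_eq_sub (Finset.mem_univ j), mul_sub,
    mul_comm _ (X j), X_mul_prod_erase]

end SymmetricPolynomials

section EigenvectorsOfT2

variable {N : ℕ} [NeZero N]

theorem T2op_eq (a : ℝ) (f : MvP N) :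
    T2op N a f = phi N (secondOrderPart f) +
      phi N (C (2 * a : ℂ)) * ∑ i : Fin N, pairOp i (i + 1) f := by
  simp only [T2op, secondOrderPart, pairOp, phi, map_sum, Finset.sum_sub_distrib, mul_sub,
    add_sub_assoc, Complex.ofReal_mul, Complex.ofReal_ofNat]

theorem T2op_C_mul (a : ℝ) (x : ℂ) (f : MvP N) :
    T2op N a (C x * f) = phi N (C x) * T2op N a f := by
  simp only [T2op, pderiv_C_mul, map_mul, rename_C, map_sub, mul_sub, mul_add, Finset.mul_sum]
  simp only [mul_left_comm (phi N (C x))]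

/-- `T_2` as a linear map. -/
def T2opHom (N : ℕ) [NeZero N] (a : ℝ) : MvP N →ₗ[ℂ] FractionRing (MvP N) where
  toFun := T2op N a
  map_add' f g := by
    simp only [T2op, map_add, map_sub, mul_add, mul_sub, map_mul, Finset.sum_add_distrib,
      Finset.sum_sub_distrib]
    ring
  map_smul' c f := by
    rw [RingHom.id_apply, Algebra.smul_def, Algebra.smul_def,
      IsScalarTower.algebraMap_apply ℂ (MvP N), algebraMap_eq]
    exact T2op_C_mul a c f

theorem T2opHom_apply (a : ℝ) (f : MvP N) : T2opHom N a f = T2op N a f := rfl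

theorem T2op_mul_of_isSymmetric (a : ℝ) (p : MvP N) {g : MvP N} (hg : g.IsSymmetric) :
    T2op N a (p * g) = phi N p * T2op N a g + phi N g * T2op N a p +
      phi N (2 * carreDuChamp p g) := by
  simp only [T2op_eq, secondOrderPart_mul, pairOp_mul p (hg _), Finset.sum_add_distrib,
    ← Finset.mul_sum, map_add, map_mul]
  simp only [phi]
  ring

theorem fin_ne_add_one (hN : 2 ≤ N) (i : Fin N) : i ≠ i + 1 := by
  intro h
  have : (1 : Fin N) = 0 := left_eq_add.mp h
  rw [Fin.one_eq_zero_iff] at this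
  omega

theorem T2op_prod_X (hN : 2 ≤ N) (a : ℝ) (S : Finset (Fin N)) :
    T2op N a (∏ j ∈ S, X j : MvP N) =
      phi N (C (2 * a * (Finset.univ.filter fun i => i ∈ S ∨ i + 1 ∈ S).card : ℂ) *
        ∏ j ∈ S, X j) := by
  simp only [T2op_eq, secondOrderPart_prod_X, pairOp_prod_X (fin_ne_add_one hN _),
    ← Finset.sum_filter, Finset.sum_const, nsmul_eq_mul, map_zero, zero_add]
  simp only [phi, map_mul, map_natCast, mul_assoc]

/-- `p` is homogeneous of degree `m` and, modulo the span of `τ_N`, an eigenvector of `T_2`: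
`T_2 p = c p + γ τ_N`. -/
structure IsEigenModTauTop (a : ℝ) (m : ℕ) (c γ : ℂ) (p : MvP N) : Prop where
  isHomogeneous : p.IsHomogeneous m
  T2op_eq : T2op N a p = phi N (C c * p + C γ * tauTop N)

variable {a : ℝ}

theorem isEigenModTauTop_prod_X (hN : 2 ≤ N) (S : Finset (Fin N)) :
    IsEigenModTauTop a S.card (2 * a * (Finset.univ.filter fun i => i ∈ S ∨ i + 1 ∈ S).card) 0
      (∏ j ∈ S, X j : MvP N) :=
  ⟨isHomogeneous_prod_X S, by rw [T2op_prod_X hN, map_zero, zero_mul, add_zero]⟩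

theorem IsEigenModTauTop.sum {ι : Type*} {S : Finset ι} {m : ℕ} {c : ℂ} {p : ι → MvP N}
    (hp : ∀ i ∈ S, IsEigenModTauTop a m c 0 (p i)) :
    IsEigenModTauTop a m c 0 (∑ i ∈ S, p i) := by
  refine ⟨IsHomogeneous.sum _ _ _ fun i hi => (hp i hi).isHomogeneous, ?_⟩
  rw [← T2opHom_apply, map_sum, map_zero, zero_mul, add_zero, Finset.mul_sum, map_sum]
  refine Finset.sum_congr rfl fun i hi => ?_
  simpa only [T2opHom_apply, map_zero, zero_mul, add_zero] using (hp i hi).T2op_eq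

theorem IsEigenModTauTop.mul {m₁ m₂ : ℕ} {c₁ c₂ δ : ℂ} {p g : MvP N}
    (hp : IsEigenModTauTop a m₁ c₁ 0 p) (hg : IsEigenModTauTop a m₂ c₂ 0 g) (hsymm : g.IsSymmetric)
    (hpg : carreDuChamp p g = p * g - C δ * tauTop N) :
    IsEigenModTauTop a (m₁ + m₂) (c₁ + c₂ + 2) (-2 * δ) (p * g) := by
  refine ⟨hp.isHomogeneous.mul hg.isHomogeneous, ?_⟩
  rw [T2op_mul_of_isSymmetric a p hsymm, hp.T2op_eq, hg.T2op_eq, hpg]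
  simp only [← map_mul, ← map_add]
  congr 1
  simp only [map_add, map_mul, map_neg, map_zero, map_ofNat]
  ring

theorem isEigenModTauTop_one : IsEigenModTauTop a 0 0 0 (1 : MvP N) :=
  ⟨isHomogeneous_one _ _, by simp [T2op]⟩

theorem isEigenModTauTop_X (hN : 2 ≤ N) (j : Fin N) :
    IsEigenModTauTop a 1 (4 * a) 0 (X j : MvP N) := by
  have pairs_meeting_j : (Finset.univ.filter fun i => i = j ∨ i + 1 = j) = {j, j - 1} := by
    ext i
    simp [eq_sub_iff_add_eq]
  have j_ne_pred : j ≠ j - 1 := by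
    simpa using (fin_ne_add_one hN (j - 1)).symm
  have h := isEigenModTauTop_prod_X (a := a) hN {j}
  simp only [Finset.mem_singleton, pairs_meeting_j, Finset.card_pair j_ne_pred,
    Finset.prod_singleton, Finset.card_singleton] at h
  convert h using 1
  push_cast
  ring

theorem isEigenModTauTop_prod_erase_X (hN : 2 ≤ N) (j : Fin N) :
    IsEigenModTauTop a (N - 1) (2 * a * N) 0 (∏ i ∈ Finset.univ.erase j, X i) := by
  have every_pair_meets (i : Fin N) : i ≠ j ∨ i + 1 ≠ j := by
    by_contra! h
    exact fin_ne_add_one hN i (h.1.trans h.2.symm)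
  simpa [every_pair_meets] using isEigenModTauTop_prod_X (a := a) hN (Finset.univ.erase j)

theorem isEigenModTauTop_sig_one (hN : 2 ≤ N) : IsEigenModTauTop a 1 (4 * a) 0 (sig N 1) := by
  rw [sig_one]
  exact IsEigenModTauTop.sum fun j _ => isEigenModTauTop_X hN j

theorem isEigenModTauTop_tauSub (hN : 2 ≤ N) :
    IsEigenModTauTop a (N - 1) (2 * a * N) 0 (tauSub N) :=
  IsEigenModTauTop.sum fun j _ => isEigenModTauTop_prod_erase_X hN j

theorem isEigenModTauTop_tauTop (hN : 2 ≤ N) :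
    IsEigenModTauTop a N (2 * a * N) 0 (tauTop N) := by
  simpa [tauTop] using isEigenModTauTop_prod_X (a := a) hN Finset.univ

theorem IsEigenModTauTop.mul_tauTop_pow (hN : 2 ≤ N) {m : ℕ} {c γ : ℂ} {p : MvP N}
    (hp : IsEigenModTauTop a m c γ p) (k : ℕ) :
    T2op N a (p * tauTop N ^ k) =
      phi N (C (c + k * (2 * a * N + 2 * m) + N * k * (k - 1)) * (p * tauTop N ^ k) +
        C γ * tauTop N ^ (k + 1)) := by
  induction k with
  | zero => simpa using hp.T2op_eq
  | succ k ih =>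
    rw [pow_succ, ← mul_assoc, T2op_mul_of_isSymmetric a _ isSymmetric_tauTop, ih,
      (isEigenModTauTop_tauTop hN).T2op_eq,
      carreDuChamp_tauTop (hp.isHomogeneous.mul (isHomogeneous_tauTop.pow k))]
    simp only [← map_mul, ← map_add]
    congr 1
    simp only [map_add, map_mul, map_sub, map_natCast, map_ofNat, map_one, map_zero,
      Nat.cast_add, Nat.cast_mul, Nat.cast_one]
    ring

end EigenvectorsOfT2

section MonomialExpansion

variable {ι σ R : Type*} [Fintype ι] [CommSemiring R]

theorem aeval_eq_sum_of_totalDegree_le {v : ι → MvPolynomial σ R} {wt : ι → ℕ}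
    (hv : ∀ i, (v i).IsHomogeneous (wt i)) {F : MvPolynomial ι R} {n : ℕ}
    (hF : (aeval v F).totalDegree ≤ n) :
    aeval v F = ∑ e ∈ F.support with ∑ i, wt i * e i ≤ n, F.coeff e • ∏ i, v i ^ e i := by
  have expansion : aeval v F = ∑ e ∈ F.support, F.coeff e • ∏ i, v i ^ e i := by
    simp only [aeval_def, eval₂_eq', Algebra.smul_def]
  have isHomogeneous_term (e : ι →₀ ℕ) :
      (F.coeff e • ∏ i, v i ^ e i).IsHomogeneous (∑ i, wt i * e i) := by
    rw [smul_eq_C_mul]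
    exact (IsHomogeneous.prod _ _ _ fun i _ => (hv i).pow (e i)).C_mul _
  have low_degree_components :
      aeval v F = ∑ k ∈ Finset.range (n + 1), homogeneousComponent k (aeval v F) := by
    conv_lhs => rw [← sum_homogeneousComponent (aeval v F)]
    refine Finset.sum_subset (Finset.range_mono (by omega)) fun k _ hk => ?_
    exact homogeneousComponent_eq_zero _ _ (by simpa using hk)
  rw [low_degree_components, expansion, Finset.sum_filter]
  simp only [map_sum, homogeneousComponent_of_mem (isHomogeneous_term _)]
  rw [Finset.sum_comm]
  simp only [Finset.sum_ite_eq', Finset.mem_range, Nat.lt_succ_iff]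

end MonomialExpansion

section SpinSpace

variable {N d : ℕ} [NeZero N]

/-- The `Σ`-valued polynomial `∑ i, P_i |s_i⟩`; for instance `Λ(z_1|s⟩)` is
`spinSum s X`. -/
def spinSum (s : SpinV N d) : (Fin N → MvP N) →ₗ[ℂ] SpinPoly N d where
  toFun P c := ∑ i, C (sComp s i c) * P i
  map_add' P Q := by
    ext1 c
    simp only [Pi.add_apply, mul_add, Finset.sum_add_distrib]
  map_smul' x P := by
    ext1 c
    simp only [Pi.smul_apply, mul_smul_comm, Finset.smul_sum, RingHom.id_apply]

theorem spinSum_apply (s : SpinV N d) (P : Fin N → MvP N) (c : Fin N → Fin d) :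
    spinSum s P c = ∑ i, C (sComp s i c) * P i := rfl

theorem spinSum_const (s : SpinV N d) (f : MvP N) :
    spinSum s (fun _ => f) = fun c => C (Lam s c) * f := by
  ext1 c
  rw [spinSum_apply, ← Finset.sum_mul, Lam, Finset.sum_apply, map_sum]

variable {n : ℕ} (s : SpinV N d)

theorem spinSum_sig_tauSub_mem_T2space {α β k : ℕ} (hα : α ≤ 1) (hβ : β ≤ 1)
    (hn : α + (N - 1) * β + N * k ≤ n) :
    spinSum s (fun _ => sig N 1 ^ α * tauSub N ^ β * tauTop N ^ k) ∈ T2space N d n := by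
  let e : Fin 3 →₀ ℕ := Finsupp.equivFunOnFinite.symm ![α, β, k]
  have aeval_monomial_e : aeval ![sig N 1, tauSub N, tauTop N] (monomial e (1 : ℂ)) =
      sig N 1 ^ α * tauSub N ^ β * tauTop N ^ k := by
    rw [aeval_monomial, Finsupp.prod_fintype _ _ (by simp)]
    simp [e, Fin.prod_univ_three]
  refine Submodule.subset_span (Or.inl (Or.inl ⟨s, monomial e 1, ?_, ?_, ?_, ?_⟩))
  · simpa [degreeOf_monomial_eq, e] using hα
  · simpa [degreeOf_monomial_eq, e] using hβ
  · rw [aeval_monomial_e]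
    refine (((isHomogeneous_sig_one.pow α).mul (isHomogeneous_tauSub.pow β)).mul
      (isHomogeneous_tauTop.pow k)).totalDegree_le.trans ?_
    rwa [one_mul]
  · rw [aeval_monomial_e, spinSum_const]

theorem spinSum_X_tauSub_mem_T2space {β k : ℕ} (hβ : β ≤ 1) (hn : (N - 1) * β + N * k + 1 ≤ n) :
    spinSum s (fun j => X j * tauSub N ^ β * tauTop N ^ k) ∈ T2space N d n := by
  let e : Fin 2 →₀ ℕ := Finsupp.equivFunOnFinite.symm ![β, k]
  have aeval_monomial_e : aeval ![tauSub N, tauTop N] (monomial e (1 : ℂ)) =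
      tauSub N ^ β * tauTop N ^ k := by
    rw [aeval_monomial, Finsupp.prod_fintype _ _ (by simp)]
    simp [e, Fin.prod_univ_two]
  refine Submodule.subset_span (Or.inl (Or.inr ⟨s, monomial e 1, ?_, ?_, ?_⟩))
  · simpa [degreeOf_monomial_eq, e] using hβ
  · rw [aeval_monomial_e]
    exact (Nat.add_le_add_right ((isHomogeneous_tauSub.pow β).mul
      (isHomogeneous_tauTop.pow k)).totalDegree_le 1).trans hn
  · ext1 c
    simp only [aeval_monomial_e, spinSum_apply, mul_assoc]

theorem spinSum_prod_erase_sig_mem_T2space {α k : ℕ} (hα : α ≤ 1)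
    (hn : α + N * k + (N - 1) ≤ n) :
    spinSum s (fun j => (∏ i ∈ Finset.univ.erase j, X i) * sig N 1 ^ α * tauTop N ^ k) ∈
      T2space N d n := by
  let e : Fin 2 →₀ ℕ := Finsupp.equivFunOnFinite.symm ![α, k]
  have aeval_monomial_e : aeval ![sig N 1, tauTop N] (monomial e (1 : ℂ)) =
      sig N 1 ^ α * tauTop N ^ k := by
    rw [aeval_monomial, Finsupp.prod_fintype _ _ (by simp)]
    simp [e, Fin.prod_univ_two]
  refine Submodule.subset_span (Or.inr ⟨s, monomial e 1, ?_, ?_, ?_⟩)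
  · simpa [degreeOf_monomial_eq, e] using hα
  · rw [aeval_monomial_e]
    refine (Nat.add_le_add_right ((isHomogeneous_sig_one.pow α).mul
      (isHomogeneous_tauTop.pow k)).totalDegree_le (N - 1)).trans ?_
    rwa [one_mul]
  · ext1 c
    simp only [aeval_monomial_e, spinSum_apply, mul_assoc]

theorem spinSum_mul_aeval_mem {ι : Type*} [Fintype ι] {v : ι → MvP N} {wt : ι → ℕ}
    (hv : ∀ i, (v i).IsHomogeneous (wt i)) {F : MvPolynomial ι ℂ}
    (hF : (aeval v F).totalDegree ≤ n) (p : Fin N → MvP N) {M : Submodule ℂ (SpinPoly N d)}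
    (hM : ∀ e ∈ F.support, ∑ i, wt i * e i ≤ n →
      spinSum s (fun j => p j * ∏ i, v i ^ e i) ∈ M) :
    spinSum s (fun j => p j * aeval v F) ∈ M := by
  have expansion : (fun j => p j * aeval v F) =
      ∑ e ∈ F.support with ∑ i, wt i * e i ≤ n, F.coeff e • fun j => p j * ∏ i, v i ^ e i := by
    ext1 j
    rw [aeval_eq_sum_of_totalDegree_le hv hF]
    simp only [Finset.mul_sum, mul_smul_comm, Finset.sum_apply, Pi.smul_apply]
  rw [expansion, map_sum]
  refine Submodule.sum_mem M fun e he => ?_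
  rw [map_smul]
  exact M.smul_mem _ (hM e (Finset.mem_filter.mp he).1 (Finset.mem_filter.mp he).2)

theorem T2space_le {M : Submodule ℂ (SpinPoly N d)}
    (hF : ∀ s : SpinV N d, ∀ α ≤ 1, ∀ β ≤ 1, ∀ k, α + (N - 1) * β + N * k ≤ n →
      spinSum s (fun _ => sig N 1 ^ α * tauSub N ^ β * tauTop N ^ k) ∈ M)
    (hG : ∀ s : SpinV N d, ∀ β ≤ 1, ∀ k, (N - 1) * β + N * k + 1 ≤ n →
      spinSum s (fun j => X j * tauSub N ^ β * tauTop N ^ k) ∈ M)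
    (hQ : ∀ s : SpinV N d, ∀ α ≤ 1, ∀ k, α + N * k + (N - 1) ≤ n →
      spinSum s (fun j => (∏ i ∈ Finset.univ.erase j, X i) * sig N 1 ^ α * tauTop N ^ k) ∈ M) :
    T2space N d n ≤ M := by
  refine Submodule.span_le.mpr ?_
  rintro _ ((⟨s, F, hσ, hτ, hdeg, rfl⟩ | ⟨s, G, hτ, hdeg, rfl⟩) | ⟨s, Q, hσ, hdeg, rfl⟩)
  · rw [← spinSum_const, SetLike.mem_coe]
    have hv : ∀ i, (![sig N 1, tauSub N, tauTop N] i).IsHomogeneous (![1, N - 1, N] i) := by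
      simp [Fin.forall_fin_succ, isHomogeneous_sig_one, isHomogeneous_tauSub, isHomogeneous_tauTop]
    have key := spinSum_mul_aeval_mem s hv hdeg (fun _ => 1) (M := M) fun e he hn => by
      simpa [Fin.prod_univ_three] using hF s (e 0) (degreeOf_le_iff.mp hσ e he)
        (e 1) (degreeOf_le_iff.mp hτ e he) (e 2) (by simpa [Fin.sum_univ_three] using hn)
    simpa only [one_mul] using key
  · have hv : ∀ i, (![tauSub N, tauTop N] i).IsHomogeneous (![N - 1, N] i) := by
      simp [Fin.forall_fin_two, isHomogeneous_tauSub, isHomogeneous_tauTop]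
    refine spinSum_mul_aeval_mem s hv (Nat.le_sub_of_add_le hdeg) X fun e he hn => ?_
    have hn' : (N - 1) * e 0 + N * e 1 ≤ n - 1 := by simpa using hn
    simpa [mul_assoc] using hG s (e 0) (degreeOf_le_iff.mp hτ e he) (e 1) (by omega)
  · have hv : ∀ i, (![sig N 1, tauTop N] i).IsHomogeneous (![1, N] i) := by
      simp [Fin.forall_fin_two, isHomogeneous_sig_one, isHomogeneous_tauTop]
    refine spinSum_mul_aeval_mem s hv (Nat.le_sub_of_add_le hdeg)
      (fun j => ∏ i ∈ Finset.univ.erase j, X i) fun e he hn => ?_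
    have hn' : e 0 + N * e 1 ≤ n - (N - 1) := by simpa using hn
    simpa [mul_assoc] using hQ s (e 0) (degreeOf_le_iff.mp hσ e he) (e 1) (by omega)

end SpinSpace

section Invariance

variable {N d n : ℕ} [NeZero N] {a : ℝ}

/-- The `Σ`-valued polynomials whose image under `T_2` is a `Σ`-valued polynomial in `𝒯_2^n`. -/
def T2preimage (N d n : ℕ) [NeZero N] (a : ℝ) : Submodule ℂ (SpinPoly N d) :=
  ((T2space N d n).map
    ((Algebra.linearMap (MvP N) (FractionRing (MvP N))).restrictScalars ℂ
      |>.compLeft (Fin N → Fin d))).comap ((T2opHom N a).compLeft (Fin N → Fin d))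

theorem mem_T2preimage {Φ : SpinPoly N d} :
    Φ ∈ T2preimage N d n a ↔
      ∃ Φ' ∈ T2space N d n, ∀ c : Fin N → Fin d, phi N (Φ' c) = T2op N a (Φ c) := by
  simp only [T2preimage, Submodule.mem_comap, Submodule.mem_map, funext_iff]
  rfl

theorem spinSum_mem_T2preimage (s : SpinV N d) {P : Fin N → MvP N} {Q : MvP N} {c : ℂ}
    (hT : ∀ j, T2op N a (P j) = phi N (C c * P j + Q)) (hP : spinSum s P ∈ T2space N d n)
    (hQ : spinSum s (fun _ => Q) ∈ T2space N d n) : spinSum s P ∈ T2preimage N d n a := by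
  refine mem_T2preimage.mpr ⟨c • spinSum s P + spinSum s (fun _ => Q),
    add_mem (Submodule.smul_mem _ c hP) hQ, fun x => ?_⟩
  rw [← map_smul, ← map_add, spinSum_apply, spinSum_apply, ← T2opHom_apply, map_sum, map_sum]
  refine Finset.sum_congr rfl fun j _ => ?_
  rw [T2opHom_apply, T2op_C_mul, hT, ← map_mul, Pi.add_apply, Pi.smul_apply, smul_eq_C_mul]

/- The correction term `γ τ_N^(k+1)` respects the degree bound because it only occurs
when `m ≥ N`. -/
theorem spinSum_mul_tauTop_pow_mem_T2preimage (hN : 2 ≤ N) {m k : ℕ} {c γ : ℂ}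
    {p : Fin N → MvP N} (hp : ∀ j, IsEigenModTauTop a m c γ (p j)) (hγ : γ = 0 ∨ N ≤ m)
    (hn : m + N * k ≤ n) {s : SpinV N d}
    (hmem : spinSum s (fun j => p j * tauTop N ^ k) ∈ T2space N d n) :
    spinSum s (fun j => p j * tauTop N ^ k) ∈ T2preimage N d n a := by
  refine spinSum_mem_T2preimage s (fun j => (hp j).mul_tauTop_pow hN k) hmem ?_
  simp only [← smul_eq_C_mul]
  change spinSum s (γ • fun _ => tauTop N ^ (k + 1)) ∈ _
  rw [map_smul]
  rcases hγ with rfl | hm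
  · simp
  · refine Submodule.smul_mem _ γ ?_
    simpa using spinSum_sig_tauSub_mem_T2space s (α := 0) (β := 0) (k := k + 1) zero_le_one
      zero_le_one (by rw [mul_add]; omega)

theorem spinSum_sig_tauSub_mem_T2preimage (hN : 2 ≤ N) (s : SpinV N d) {α β k : ℕ}
    (hα : α ≤ 1) (hβ : β ≤ 1) (hn : α + (N - 1) * β + N * k ≤ n) :
    spinSum s (fun _ => sig N 1 ^ α * tauSub N ^ β * tauTop N ^ k) ∈ T2preimage N d n a := by
  have hmem := spinSum_sig_tauSub_mem_T2space s hα hβ hn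
  have hσ := isEigenModTauTop_sig_one (a := a) hN
  have hτ := isEigenModTauTop_tauSub (a := a) hN
  interval_cases α <;> interval_cases β <;>
    simp only [pow_zero, pow_one, one_mul, mul_one] at hmem ⊢
  · simpa using spinSum_mul_tauTop_pow_mem_T2preimage hN (fun _ => isEigenModTauTop_one)
      (Or.inl rfl) (by omega) (by simpa using hmem)
  · exact spinSum_mul_tauTop_pow_mem_T2preimage hN (fun _ => hτ) (Or.inl rfl) (by omega) hmem
  · exact spinSum_mul_tauTop_pow_mem_T2preimage hN (fun _ => hσ) (Or.inl rfl) (by omega) hmem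
  · rw [mul_comm (sig N 1)] at hmem ⊢
    exact spinSum_mul_tauTop_pow_mem_T2preimage hN
      (fun _ => hτ.mul hσ isSymmetric_sig_one carreDuChamp_tauSub_sig)
      (Or.inr (by omega)) (by omega) hmem

theorem spinSum_X_tauSub_mem_T2preimage (hN : 2 ≤ N) (s : SpinV N d) {β k : ℕ} (hβ : β ≤ 1)
    (hn : (N - 1) * β + N * k + 1 ≤ n) :
    spinSum s (fun j => X j * tauSub N ^ β * tauTop N ^ k) ∈ T2preimage N d n a := by
  have hmem := spinSum_X_tauSub_mem_T2space s hβ hn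
  interval_cases β <;> simp only [pow_zero, pow_one, mul_one] at hmem ⊢
  · exact spinSum_mul_tauTop_pow_mem_T2preimage hN (isEigenModTauTop_X hN) (Or.inl rfl)
      (by omega) hmem
  · refine spinSum_mul_tauTop_pow_mem_T2preimage hN
      (fun j => (isEigenModTauTop_X hN j).mul
        (isEigenModTauTop_tauSub hN) isSymmetric_tauSub (δ := 1) ?_)
      (Or.inr (by omega)) (by omega) hmem
    rw [map_one, one_mul, carreDuChamp_X_tauSub]

theorem spinSum_prod_erase_sig_mem_T2preimage (hN : 2 ≤ N) (s : SpinV N d) {α k : ℕ}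
    (hα : α ≤ 1) (hn : α + N * k + (N - 1) ≤ n) :
    spinSum s (fun j => (∏ i ∈ Finset.univ.erase j, X i) * sig N 1 ^ α * tauTop N ^ k) ∈
      T2preimage N d n a := by
  have hmem := spinSum_prod_erase_sig_mem_T2space s hα hn
  interval_cases α <;> simp only [pow_zero, pow_one, mul_one] at hmem ⊢
  · exact spinSum_mul_tauTop_pow_mem_T2preimage hN (isEigenModTauTop_prod_erase_X hN) (Or.inl rfl)
      (by omega) hmem
  · refine spinSum_mul_tauTop_pow_mem_T2preimage hN
      (fun j => (isEigenModTauTop_prod_erase_X hN j).mul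
        (isEigenModTauTop_sig_one hN) isSymmetric_sig_one (δ := 1) ?_)
      (Or.inr (by omega)) (by omega) hmem
    rw [map_one, one_mul, carreDuChamp_prod_erase_sig]

theorem T2space_le_T2preimage (hN : 2 ≤ N) : T2space N d n ≤ T2preimage N d n a :=
  T2space_le
    (fun s _ hα _ hβ _ hn => spinSum_sig_tauSub_mem_T2preimage hN s hα hβ hn)
    (fun s _ hβ _ hn => spinSum_X_tauSub_mem_T2preimage hN s hβ hn)
    (fun s _ hα _ hn => spinSum_prod_erase_sig_mem_T2preimage hN s hα hn)

end Invariance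

theorem stmt_7 (N d : ℕ) [NeZero N] (hN : 3 ≤ N) (hd : 1 ≤ d) (a : ℝ) (n : ℕ)
    (Φ : SpinPoly N d) (hΦ : Φ ∈ T2space N d n) :
    ∃ Φ' ∈ T2space N d n, ∀ c : Fin N → Fin d, phi N (Φ' c) = T2op N a (Φ c) :=
  mem_T2preimage.mp (T2space_le_T2preimage (by omega) hΦ)
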